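/- arXiv:2605.02062 — 7 statements merged into one kernel-verified Lean document; each statement's English description precedes it below -/
import Mathlib

section
/- Let U be a random variable taking values in a measurable space, and let g and h be measurable real-valued functions of U with E[|g(U)|] < ∞, E[|h(U)|] < ∞, and sup_u |g(u) − h(u)| ≤ ε. Let F_g(t) = P(g(U) ≤ t) and F_h(t) = P(h(U) ≤ t). Then ∫_{−∞}^{∞} (F_g(t) − F_h(t))² dt ≤ 4ε. -/
open MeasureTheory ProbabilityTheory

/-!
The events `X ≤ t` and `Y ≤ t` differ exactly when `t` lies in the half-open interval between `X`
and `Y`. By Tonelli, integrating the probability of this difference over `t` gives `E|X - Y|`, so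
the `L¹` distance of the two CDFs is at most `E|X - Y|`. As CDFs take values in `[0, 1]`, the
squared difference is dominated by the absolute difference.
-/

open scoped symmDiff

theorem Ici_symmDiff_Ici {α : Type*} [LinearOrder α] (a b : α) :
    Set.Ici a ∆ Set.Ici b = Set.Ico (min a b) (max a b) := by
  ext t
  simp only [Set.mem_symmDiff, Set.mem_Ici, Set.mem_Ico, min_le_iff, lt_max_iff]
  grind

section

variable {Ω : Type*} [MeasurableSpace Ω] {μ : Measure Ω}

section LinearOrder

variable {α : Type*} [LinearOrder α] [TopologicalSpace α] [OrderClosedTopology α]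
  [SecondCountableTopology α] [MeasurableSpace α] [OpensMeasurableSpace α]
  {ν : Measure α} [SFinite μ] [SFinite ν] {X Y : Ω → α}

theorem lintegral_measure_symmDiff_setOf_le_of_measurable (hX : Measurable X) (hY : Measurable Y) :
    ∫⁻ t, μ ({ω | X ω ≤ t} ∆ {ω | Y ω ≤ t}) ∂ν =
      ∫⁻ ω, ν (Set.Ico (min (X ω) (Y ω)) (max (X ω) (Y ω))) ∂μ := by
  let S : Set (α × Ω) := {p | X p.2 ≤ p.1} ∆ {p | Y p.2 ≤ p.1}
  have hS : MeasurableSet S :=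
    (measurableSet_le (hX.comp measurable_snd) measurable_fst).symmDiff
      (measurableSet_le (hY.comp measurable_snd) measurable_fst)
  calc ∫⁻ t, μ ({ω | X ω ≤ t} ∆ {ω | Y ω ≤ t}) ∂ν
      = ν.prod μ S := (Measure.prod_apply hS).symm
    _ = ∫⁻ ω, ν (Set.Ici (X ω) ∆ Set.Ici (Y ω)) ∂μ := Measure.prod_apply_symm hS
    _ = ∫⁻ ω, ν (Set.Ico (min (X ω) (Y ω)) (max (X ω) (Y ω))) ∂μ := by
      simp only [Ici_symmDiff_Ici]

theorem lintegral_measure_symmDiff_setOf_le (hX : AEMeasurable X μ) (hY : AEMeasurable Y μ) :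
    ∫⁻ t, μ ({ω | X ω ≤ t} ∆ {ω | Y ω ≤ t}) ∂ν =
      ∫⁻ ω, ν (Set.Ico (min (X ω) (Y ω)) (max (X ω) (Y ω))) ∂μ := by
  calc ∫⁻ t, μ ({ω | X ω ≤ t} ∆ {ω | Y ω ≤ t}) ∂ν
      = ∫⁻ t, μ ({ω | hX.mk X ω ≤ t} ∆ {ω | hY.mk Y ω ≤ t}) ∂ν :=
        lintegral_congr fun t ↦ measure_congr <|
          (hX.ae_eq_mk.preimage (Set.Iic t)).symmDiff (hY.ae_eq_mk.preimage (Set.Iic t))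
    _ = ∫⁻ ω, ν (Set.Ico (min (hX.mk X ω) (hY.mk Y ω)) (max (hX.mk X ω) (hY.mk Y ω))) ∂μ :=
        lintegral_measure_symmDiff_setOf_le_of_measurable hX.measurable_mk hY.measurable_mk
    _ = ∫⁻ ω, ν (Set.Ico (min (X ω) (Y ω)) (max (X ω) (Y ω))) ∂μ := by
        refine lintegral_congr_ae ?_
        filter_upwards [hX.ae_eq_mk, hY.ae_eq_mk] with ω hXω hYω
        rw [hXω, hYω]

end LinearOrder

variable {X Y : Ω → ℝ}

theorem lintegral_enorm_measureReal_setOf_le_sub_le_lintegral_enorm [IsFiniteMeasure μ]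
    (hX : AEMeasurable X μ) (hY : AEMeasurable Y μ) :
    ∫⁻ t, ‖μ.real {ω | X ω ≤ t} - μ.real {ω | Y ω ≤ t}‖ₑ ≤ ∫⁻ ω, ‖X ω - Y ω‖ₑ ∂μ := by
  have enorm_sub_le_symmDiff (t : ℝ) :
      ‖μ.real {ω | X ω ≤ t} - μ.real {ω | Y ω ≤ t}‖ₑ ≤ μ ({ω | X ω ≤ t} ∆ {ω | Y ω ≤ t}) := by
    rw [Real.enorm_eq_ofReal_abs]
    exact ENNReal.ofReal_le_of_le_toReal <| abs_measureReal_sub_le_measureReal_symmDiff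
      (nullMeasurableSet_le hX aemeasurable_const) (nullMeasurableSet_le hY aemeasurable_const)
  calc ∫⁻ t, ‖μ.real {ω | X ω ≤ t} - μ.real {ω | Y ω ≤ t}‖ₑ
      ≤ ∫⁻ t, μ ({ω | X ω ≤ t} ∆ {ω | Y ω ≤ t}) := lintegral_mono enorm_sub_le_symmDiff
    _ = ∫⁻ ω, volume (Set.Ico (min (X ω) (Y ω)) (max (X ω) (Y ω))) ∂μ :=
        lintegral_measure_symmDiff_setOf_le hX hY
    _ = ∫⁻ ω, ‖X ω - Y ω‖ₑ ∂μ := by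
        simp only [Real.volume_Ico, max_sub_min_eq_abs', Real.enorm_eq_ofReal_abs]

theorem sq_measureReal_sub_le_abs [IsZeroOrProbabilityMeasure μ] (s t : Set Ω) :
    (μ.real s - μ.real t) ^ 2 ≤ |μ.real s - μ.real t| := by
  have abs_le_one : |μ.real s - μ.real t| ≤ 1 :=
    abs_sub_le_of_nonneg_of_le measureReal_nonneg measureReal_le_one
      measureReal_nonneg measureReal_le_one
  rw [← sq_abs]
  exact pow_le_of_le_one (abs_nonneg _) abs_le_one two_ne_zero

theorem integral_sq_measureReal_setOf_le_sub_le_integral_abs [IsZeroOrProbabilityMeasure μ]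
    (hX : AEMeasurable X μ) (hY : AEMeasurable Y μ) (hXY : Integrable (fun ω ↦ X ω - Y ω) μ) :
    ∫ t, (μ.real {ω | X ω ≤ t} - μ.real {ω | Y ω ≤ t}) ^ 2 ≤ ∫ ω, |X ω - Y ω| ∂μ := by
  have enorm_sq_le (t : ℝ) : ‖(μ.real {ω | X ω ≤ t} - μ.real {ω | Y ω ≤ t}) ^ 2‖ₑ ≤
      ‖μ.real {ω | X ω ≤ t} - μ.real {ω | Y ω ≤ t}‖ₑ := by
    rw [Real.enorm_eq_ofReal_abs, Real.enorm_eq_ofReal_abs, abs_sq]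
    exact ENNReal.ofReal_le_ofReal (sq_measureReal_sub_le_abs _ _)
  have enorm_integral_le : ‖∫ t, (μ.real {ω | X ω ≤ t} - μ.real {ω | Y ω ≤ t}) ^ 2‖ₑ ≤
      ENNReal.ofReal (∫ ω, |X ω - Y ω| ∂μ) :=
    calc ‖∫ t, (μ.real {ω | X ω ≤ t} - μ.real {ω | Y ω ≤ t}) ^ 2‖ₑ
        ≤ ∫⁻ t, ‖(μ.real {ω | X ω ≤ t} - μ.real {ω | Y ω ≤ t}) ^ 2‖ₑ :=
          enorm_integral_le_lintegral_enorm _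
      _ ≤ ∫⁻ t, ‖μ.real {ω | X ω ≤ t} - μ.real {ω | Y ω ≤ t}‖ₑ := lintegral_mono enorm_sq_le
      _ ≤ ∫⁻ ω, ‖X ω - Y ω‖ₑ ∂μ :=
          lintegral_enorm_measureReal_setOf_le_sub_le_lintegral_enorm hX hY
      _ = ENNReal.ofReal (∫ ω, |X ω - Y ω| ∂μ) :=
          (ofReal_integral_norm_eq_lintegral_enorm hXY).symm
  exact (ENNReal.ofReal_le_ofReal_iff (integral_nonneg fun _ ↦ abs_nonneg _)).mp <|
    (Real.ofReal_le_enorm _).trans enorm_integral_le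

theorem cdf_sup_perturbation_square_integral_le_general [IsProbabilityMeasure μ]
    (hX : AEMeasurable X μ) (hY : AEMeasurable Y μ) {ε : ℝ} (hε : ∀ᵐ ω ∂μ, |X ω - Y ω| ≤ ε) :
    ∫ t, (μ.real {ω | X ω ≤ t} - μ.real {ω | Y ω ≤ t}) ^ 2 ≤ ε := by
  have hXY : Integrable (fun ω ↦ X ω - Y ω) μ :=
    .of_bound (hX.sub hY).aestronglyMeasurable ε hε
  calc ∫ t, (μ.real {ω | X ω ≤ t} - μ.real {ω | Y ω ≤ t}) ^ 2
      ≤ ∫ ω, |X ω - Y ω| ∂μ := integral_sq_measureReal_setOf_le_sub_le_integral_abs hX hY hXY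
    _ ≤ ∫ _, ε ∂μ := integral_mono_ae hXY.abs (integrable_const ε) hε
    _ = ε := by simp only [integral_const, probReal_univ, one_smul]

end

/-- If `g` and `h` are measurable functions of a random variable `U` with integrable
images and `sup_u |g(u) − h(u)| ≤ ε`, then `∫ (F_g(t) − F_h(t))² dt ≤ 4ε`, where
`F_g` and `F_h` are the CDFs of `g(U)` and `h(U)`. -/
theorem cdf_sup_perturbation_square_integral_le
    {Ω 𝒰 : Type*} [MeasureSpace Ω] [IsProbabilityMeasure (ℙ : Measure Ω)]
    [MeasurableSpace 𝒰] (U : Ω → 𝒰) (hU : Measurable U)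
    (g h : 𝒰 → ℝ) (hg : Measurable g) (hh : Measurable h)
    (hig : Integrable (fun ω => g (U ω)) ℙ) (hih : Integrable (fun ω => h (U ω)) ℙ)
    (ε : ℝ) (hε : ∀ u, |g u - h u| ≤ ε) :
    ∫ t : ℝ, ((ℙ {ω | g (U ω) ≤ t}).toReal - (ℙ {ω | h (U ω) ≤ t}).toReal) ^ 2
      ≤ 4 * ε := by
  have hε₀ : 0 ≤ ε := (abs_nonneg _).trans (hε (U (nonempty_of_isProbabilityMeasure ℙ).some))
  exact (cdf_sup_perturbation_square_integral_le_general (hg.comp hU).aemeasurable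
    (hh.comp hU).aemeasurable (.of_forall fun ω ↦ hε (U ω))).trans (by linarith)
end

section
/- Let Z be a real-valued random variable with E[|Z|] < ∞, let Z' be an independent copy of Z, let F_Z(t) = P(Z ≤ t), and let y ∈ ℝ. Then 2·E[|y − Z|] − E[|Z − Z'|] = 2·∫_{−∞}^{∞} (F_Z(t) − 1{y ≤ t})² dt, where 1{y ≤ t} is the indicator function that equals 1 when y ≤ t and 0 otherwise. -/
open MeasureTheory ProbabilityTheory

/-!
A threshold `t` separates `x` from `y` when exactly one of them is at most `t`. The thresholds doing
so form an interval of length `|x - y|`, so by Tonelli `E|X - Y|` is the integral over `t` of the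
probability that `t` separates `X` from `Y`. For independent `X` and `Y` with distribution functions
`F` and `G` this probability is `F (1 - G) + (1 - F) G`, and pointwise
`2 (F (1 - G) + (1 - F) G) - 2 F (1 - F) - 2 G (1 - G) = 2 (F - G)²`.
Integrating gives Cramér's formula for the energy distance of two laws; the point identity is the
case where one of the laws is a point mass.
-/

/-- The pairs separated by the threshold `t`: exactly one coordinate is at most `t`. The weak
inequality matches the right-continuous convention `P(Z ≤ t)` for distribution functions. -/
def separatedPairs {α : Type*} [LE α] (t : α) : Set (α × α) :=
  {p | Xor (p.1 ≤ t) (p.2 ≤ t)}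

theorem setOf_mem_separatedPairs {α : Type*} [LinearOrder α] (p : α × α) :
    {t | p ∈ separatedPairs t} = Set.Ico (min p.1 p.2) (max p.1 p.2) := by
  ext t
  simp only [separatedPairs, Xor, Set.mem_ofPred_eq, Set.mem_Ico, min_le_iff, lt_max_iff]
  grind

theorem volume_setOf_mem_separatedPairs (p : ℝ × ℝ) :
    volume {t | p ∈ separatedPairs t} = edist p.1 p.2 := by
  rw [setOf_mem_separatedPairs, Real.volume_Ico, max_sub_min_eq_abs', edist_dist, Real.dist_eq]

theorem measurableSet_setOf_mem_separatedPairs :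
    MeasurableSet {q : (ℝ × ℝ) × ℝ | q.1 ∈ separatedPairs q.2} :=
  (measurableSet_le (by fun_prop) measurable_snd).symmDiff
    (measurableSet_le (by fun_prop) measurable_snd)

theorem measurable_measure_separatedPairs (π : Measure (ℝ × ℝ)) [SFinite π] :
    Measurable fun t ↦ π (separatedPairs t) :=
  measurable_measure_prodMk_right measurableSet_setOf_mem_separatedPairs

theorem lintegral_edist_eq_lintegral_measure_separatedPairs (π : Measure (ℝ × ℝ)) [SFinite π] :
    ∫⁻ p, edist p.1 p.2 ∂π = ∫⁻ t, π (separatedPairs t) := by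
  calc
    ∫⁻ p, edist p.1 p.2 ∂π = ∫⁻ p, volume {t | p ∈ separatedPairs t} ∂π := by
      simp only [volume_setOf_mem_separatedPairs]
    _ = (π.prod volume) {q : (ℝ × ℝ) × ℝ | q.1 ∈ separatedPairs q.2} :=
      (Measure.prod_apply measurableSet_setOf_mem_separatedPairs).symm
    _ = ∫⁻ t, π (separatedPairs t) :=
      Measure.prod_apply_symm measurableSet_setOf_mem_separatedPairs

theorem integral_abs_sub_eq_integral_measureReal_separatedPairs (π : Measure (ℝ × ℝ))
    [IsFiniteMeasure π] :
    ∫ p, |p.1 - p.2| ∂π = ∫ t, π.real (separatedPairs t) := by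
  calc
    ∫ p, |p.1 - p.2| ∂π = ∫ p, (edist p.1 p.2).toReal ∂π := by
      simp only [← Real.dist_eq, dist_edist]
    _ = (∫⁻ p, edist p.1 p.2 ∂π).toReal :=
      integral_toReal (by fun_prop) (.of_forall fun p ↦ edist_lt_top p.1 p.2)
    _ = (∫⁻ t, π (separatedPairs t)).toReal := by
      rw [lintegral_edist_eq_lintegral_measure_separatedPairs]
    _ = ∫ t, π.real (separatedPairs t) :=
      (integral_toReal (measurable_measure_separatedPairs π).aemeasurable
        (.of_forall fun _ ↦ measure_lt_top π _)).symm

theorem integrable_measureReal_separatedPairs {π : Measure (ℝ × ℝ)} [SFinite π]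
    (hπ : Integrable (fun p ↦ p.1 - p.2) π) :
    Integrable fun t ↦ π.real (separatedPairs t) := by
  refine integrable_toReal_of_lintegral_ne_top
    (measurable_measure_separatedPairs π).aemeasurable ?_
  rw [← lintegral_edist_eq_lintegral_measure_separatedPairs]
  simpa only [edist_eq_enorm_sub] using hπ.hasFiniteIntegral.ne

section Product

variable (μ ν : Measure ℝ) [IsProbabilityMeasure μ] [IsProbabilityMeasure ν]

theorem prod_real_separatedPairs (t : ℝ) :
    (μ.prod ν).real (separatedPairs t) =
      cdf μ t * (1 - cdf ν t) + (1 - cdf μ t) * cdf ν t := by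
  have separatedPairs_eq : separatedPairs t =
      Set.Iic t ×ˢ (Set.Iic t)ᶜ ∪ (Set.Iic t)ᶜ ×ˢ Set.Iic t := by
    ext p
    simp only [separatedPairs, Xor, Set.mem_ofPred_eq, Set.mem_union, Set.mem_prod,
      Set.mem_compl_iff, Set.mem_Iic]
    tauto
  have disjoint : Disjoint (Set.Iic t ×ˢ (Set.Iic t)ᶜ) ((Set.Iic t)ᶜ ×ˢ Set.Iic t) :=
    Set.disjoint_prod.2 (.inl disjoint_compl_right)
  rw [separatedPairs_eq,
    measureReal_union disjoint (measurableSet_Iic.compl.prod measurableSet_Iic),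
    measureReal_prod_prod, measureReal_prod_prod, probReal_compl_eq_one_sub measurableSet_Iic,
    probReal_compl_eq_one_sub measurableSet_Iic, cdf_eq_real, cdf_eq_real]

theorem integral_prod_abs_sub_eq_integral_cdf :
    ∫ p, |p.1 - p.2| ∂(μ.prod ν) =
      ∫ t, (cdf μ t * (1 - cdf ν t) + (1 - cdf μ t) * cdf ν t) := by
  simp only [integral_abs_sub_eq_integral_measureReal_separatedPairs, prod_real_separatedPairs]

variable {μ ν}

theorem integrable_cdf_mul_one_sub_cdf_add (hμ : Integrable id μ) (hν : Integrable id ν) :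
    Integrable fun t ↦ cdf μ t * (1 - cdf ν t) + (1 - cdf μ t) * cdf ν t := by
  simpa only [prod_real_separatedPairs] using
    integrable_measureReal_separatedPairs ((hμ.comp_fst ν).sub (hν.comp_snd μ))

theorem energy_distance_eq_two_mul_integral_sq_cdf_sub
    (hμ : Integrable id μ) (hν : Integrable id ν) :
    2 * (∫ p, |p.1 - p.2| ∂(μ.prod ν)) - (∫ p, |p.1 - p.2| ∂(μ.prod μ))
        - (∫ p, |p.1 - p.2| ∂(ν.prod ν)) =
      2 * ∫ t, (cdf μ t - cdf ν t) ^ 2 := by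
  have hμν := (integrable_cdf_mul_one_sub_cdf_add hμ hν).const_mul 2
  have hμμ := integrable_cdf_mul_one_sub_cdf_add hμ hμ
  have hνν := integrable_cdf_mul_one_sub_cdf_add hν hν
  simp only [integral_prod_abs_sub_eq_integral_cdf, ← integral_const_mul]
  rw [← integral_sub hμν hμμ, ← integral_sub (hμν.sub' hμμ) hνν]
  congr 1 with t
  ring

end Product

section RandomVariables

variable {Ω : Type*} [MeasurableSpace Ω] {μ : Measure Ω} {X Y : Ω → ℝ}

theorem integral_abs_sub_eq_integral_prod_map [IsFiniteMeasure μ] (hX : AEMeasurable X μ)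
    (hY : AEMeasurable Y μ) (hXY : IndepFun X Y μ) :
    ∫ ω, |X ω - Y ω| ∂μ = ∫ p, |p.1 - p.2| ∂((μ.map X).prod (μ.map Y)) := by
  rw [← (indepFun_iff_map_prod_eq_prod_map_map hX hY).1 hXY,
    integral_map (hX.prodMk hY) (by fun_prop)]

theorem cdf_map_eq_measureReal [IsProbabilityMeasure μ] (hX : AEMeasurable X μ) (t : ℝ) :
    cdf (μ.map X) t = μ.real {ω | X ω ≤ t} := by
  have := Measure.isProbabilityMeasure_map hX
  rw [cdf_eq_real, map_measureReal_apply_of_aemeasurable hX measurableSet_Iic]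
  rfl

theorem energy_loss_point_identity_general [IsProbabilityMeasure μ] {X' Y' : Ω → ℝ}
    (hX : Integrable X μ) (hY : Integrable Y μ) (hXY : IndepFun X Y μ)
    (hXX' : IndepFun X X' μ) (hX' : IdentDistrib X X' μ μ)
    (hYY' : IndepFun Y Y' μ) (hY' : IdentDistrib Y Y' μ μ) :
    2 * (∫ ω, |X ω - Y ω| ∂μ) - (∫ ω, |X ω - X' ω| ∂μ) - (∫ ω, |Y ω - Y' ω| ∂μ) =
      2 * ∫ t, (μ.real {ω | X ω ≤ t} - μ.real {ω | Y ω ≤ t}) ^ 2 := by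
  have := Measure.isProbabilityMeasure_map hX.aemeasurable
  have := Measure.isProbabilityMeasure_map hY.aemeasurable
  have integrable_id_map {W : Ω → ℝ} (hW : Integrable W μ) : Integrable id (μ.map W) :=
    (integrable_map_measure aestronglyMeasurable_id hW.aemeasurable).2 hW
  rw [integral_abs_sub_eq_integral_prod_map hX.aemeasurable hY.aemeasurable hXY,
    integral_abs_sub_eq_integral_prod_map hX.aemeasurable hX'.aemeasurable_snd hXX',
    integral_abs_sub_eq_integral_prod_map hY.aemeasurable hY'.aemeasurable_snd hYY',
    ← hX'.map_eq, ← hY'.map_eq]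
  simpa only [cdf_map_eq_measureReal hX.aemeasurable, cdf_map_eq_measureReal hY.aemeasurable] using
    energy_distance_eq_two_mul_integral_sq_cdf_sub (integrable_id_map hX) (integrable_id_map hY)

end RandomVariables

/-- For an integrable real random variable `Z` with independent copy `Z'`, CDF `F_Z`,
and any `y ∈ ℝ`: `2 E|y − Z| − E|Z − Z'| = 2 ∫ (F_Z(t) − 1{y ≤ t})² dt`. -/
theorem energy_loss_point_identity
    {Ω : Type*} [MeasureSpace Ω] [IsProbabilityMeasure (ℙ : Measure Ω)]
    (Z Z' : Ω → ℝ) (hZ : Measurable Z) (hZ' : Measurable Z')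
    (hiZ : Integrable Z ℙ)
    (hindep : IndepFun Z Z' ℙ) (hid : IdentDistrib Z Z' ℙ ℙ)
    (y : ℝ) :
    2 * (∫ ω, |y - Z ω| ∂ℙ) - (∫ ω, |Z ω - Z' ω| ∂ℙ)
      = 2 * ∫ t : ℝ, ((ℙ {ω | Z ω ≤ t}).toReal - (if y ≤ t then (1 : ℝ) else 0)) ^ 2 := by
  have measure_const_le (t : ℝ) :
      ((ℙ : Measure Ω) {_ω | y ≤ t}).toReal = if y ≤ t then 1 else 0 := by
    split_ifs with hyt <;> simp [hyt]
  simpa [measure_const_le, abs_sub_comm, Measure.real] using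
    energy_loss_point_identity_general hiZ (integrable_const y) (indepFun_const_right Z y)
      hindep hid (indepFun_const_right _ y) (.refl aemeasurable_const)
end

section
/- Let 𝒳 be a standard Borel space and let (X, Y) be a random pair with distribution μ₀ on 𝒳 × ℝ such that |Y| ≤ c₀ almost surely for some constant c₀ > 0. Let U and U' be i.i.d. random variables with distribution μ_u on a measurable space 𝒰, independent of (X, Y), and let g : 𝒳 × 𝒰 → ℝ be a bounded measurable function. Define the induced conditional CDF F_g(x, t) = μ_u({u : g(x, u) ≤ t}) and let F*(x, t) = P(Y ≤ t | X = x) denote a regular conditional CDF of Y given X = x under μ₀. Then E[2|Y − g(X, U)| − |g(X, U) − g(X, U')|] = 2·∫_𝒳 ∫_ℝ (F_g(x, t) − F*(x, t))² dt μ_X(dx) + ∫_𝒳 (∬ |y − y'| F*(x, dy) F*(x, dy')) μ_X(dx), where μ_X is the marginal law of X and F*(x, ·) also denotes the conditional law of Y given X = x. -/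
open MeasureTheory ProbabilityTheory

/-!
Since `|x - y| = (x - y)⁺ + (y - x)⁺` and `(y - x)⁺` is the length of `{t | x ≤ t < y}`, Tonelli
gives `E|X - Y| = ∫ F (1 - G) + G (1 - F)` for independent `X ∼ F` and `Y ∼ G`. Inserting this in
each of the three mean absolute differences and using
`(F - G)² = F (1 - G) + G (1 - F) - F (1 - F) - G (1 - G)` yields
`2 E|Y - Z| - E|Z - Z'| = 2 ∫ (F - G)² + E|Y - Y'|` as soon as `Y` and `Z` are integrable.
The theorem is this identity for the conditional laws of `Y` and of `g X U` given `X = x`,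
integrated over `x`.
-/

section RealMeasures

variable {μ ν : Measure ℝ}

lemma lintegral_prod_ofReal_sub [SFinite μ] [SFinite ν] :
    ∫⁻ p, ENNReal.ofReal (p.2 - p.1) ∂μ.prod ν = ∫⁻ t, μ (Set.Iic t) * ν (Set.Ioi t) := by
  set S : Set ((ℝ × ℝ) × ℝ) := {q | q.2 ∈ Set.Ico q.1.1 q.1.2}
  have hS : MeasurableSet S :=
    (measurableSet_le (f := fun q : (ℝ × ℝ) × ℝ ↦ q.1.1) (by fun_prop) measurable_snd).inter
      (measurableSet_lt measurable_snd (by fun_prop))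
  calc ∫⁻ p, ENNReal.ofReal (p.2 - p.1) ∂μ.prod ν
      = ∫⁻ p, volume (Set.Ico p.1 p.2) ∂μ.prod ν := by simp only [Real.volume_Ico]
    _ = ((μ.prod ν).prod volume) S := (Measure.prod_apply hS).symm
    _ = ∫⁻ t, (μ.prod ν) (Set.Iic t ×ˢ Set.Ioi t) := Measure.prod_apply_symm hS
    _ = ∫⁻ t, μ (Set.Iic t) * ν (Set.Ioi t) := by simp only [Measure.prod_prod]

lemma measurable_measure_Iic_mul_measure_Ioi :
    Measurable fun t ↦ μ (Set.Iic t) * ν (Set.Ioi t) :=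
  have hIic : Monotone fun t ↦ μ (Set.Iic t) := fun _ _ h ↦ measure_mono (Set.Iic_subset_Iic.2 h)
  have hIoi : Antitone fun t ↦ ν (Set.Ioi t) := fun _ _ h ↦ measure_mono (Set.Ioi_subset_Ioi h)
  hIic.measurable.mul hIoi.measurable

variable [IsFiniteMeasure μ] [IsFiniteMeasure ν]

lemma integrable_prod_sub (hμ : Integrable id μ) (hν : Integrable id ν) :
    Integrable (fun p : ℝ × ℝ ↦ p.1 - p.2) (μ.prod ν) :=
  (hμ.comp_fst ν).sub (hν.comp_snd μ)

lemma integrable_measureReal_Iic_mul_measureReal_Ioi (hμ : Integrable id μ) (hν : Integrable id ν) :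
    Integrable fun t ↦ μ.real (Set.Iic t) * ν.real (Set.Ioi t) := by
  have hfin : ∫⁻ t, μ (Set.Iic t) * ν (Set.Ioi t) ≠ ⊤ := by
    rw [← lintegral_prod_ofReal_sub]
    exact ((integrable_prod_sub hμ hν).neg.congr
      (.of_forall fun p ↦ neg_sub p.1 p.2)).lintegral_lt_top.ne
  simpa only [ENNReal.toReal_mul] using!
    integrable_toReal_of_lintegral_ne_top measurable_measure_Iic_mul_measure_Ioi.aemeasurable hfin

lemma integral_prod_posPart_sub :
    ∫ p, (p.2 - p.1)⁺ ∂μ.prod ν = ∫ t, μ.real (Set.Iic t) * ν.real (Set.Ioi t) := by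
  calc ∫ p, (p.2 - p.1)⁺ ∂μ.prod ν
      = (∫⁻ p, ENNReal.ofReal (p.2 - p.1) ∂μ.prod ν).toReal := by
        rw [integral_eq_lintegral_of_nonneg_ae (.of_forall fun _ ↦ posPart_nonneg _) (by fun_prop)]
        simp [posPart_def, ENNReal.ofReal_max]
    _ = (∫⁻ t, μ (Set.Iic t) * ν (Set.Ioi t)).toReal := by rw [lintegral_prod_ofReal_sub]
    _ = ∫ t, μ.real (Set.Iic t) * ν.real (Set.Ioi t) := by
        rw [← integral_toReal measurable_measure_Iic_mul_measure_Ioi.aemeasurable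
          (.of_forall fun t ↦ ENNReal.mul_lt_top (measure_lt_top _ _) (measure_lt_top _ _))]
        simp only [ENNReal.toReal_mul, measureReal_def]

lemma integral_integral_abs_sub (hμ : Integrable id μ) (hν : Integrable id ν) :
    ∫ x, ∫ y, |x - y| ∂ν ∂μ =
      (∫ t, μ.real (Set.Iic t) * ν.real (Set.Ioi t))
        + ∫ t, ν.real (Set.Iic t) * μ.real (Set.Ioi t) := by
  have hsub := integrable_prod_sub hμ hν
  have hpos : Integrable (fun p : ℝ × ℝ ↦ (p.1 - p.2)⁺) (μ.prod ν) := hsub.pos_part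
  have hneg : Integrable (fun p : ℝ × ℝ ↦ (p.1 - p.2)⁻) (μ.prod ν) := hsub.neg_part
  calc ∫ x, ∫ y, |x - y| ∂ν ∂μ
      = ∫ p, |p.1 - p.2| ∂μ.prod ν := (integral_prod _ hsub.abs).symm
    _ = (∫ p, (p.1 - p.2)⁻ ∂μ.prod ν) + ∫ p, (p.1 - p.2)⁺ ∂μ.prod ν := by
        simp only [← posPart_add_negPart]
        rw [integral_add hpos hneg, add_comm]
    _ = (∫ p, (p.2 - p.1)⁺ ∂μ.prod ν) + ∫ p, (p.2 - p.1)⁺ ∂ν.prod μ := by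
        rw [← integral_prod_swap (μ := ν) (ν := μ)]
        simp only [← posPart_neg, neg_sub, Prod.fst_swap, Prod.snd_swap]
    _ = _ := by rw [integral_prod_posPart_sub, integral_prod_posPart_sub]

end RealMeasures

lemma two_mul_integral_measureReal_Iic_sub_sq {μ ν : Measure ℝ} [IsProbabilityMeasure μ]
    [IsProbabilityMeasure ν] (hμ : Integrable id μ) (hν : Integrable id ν) :
    2 * ∫ t, (μ.real (Set.Iic t) - ν.real (Set.Iic t)) ^ 2 =
      2 * (∫ x, ∫ y, |x - y| ∂μ ∂ν) - (∫ x, ∫ y, |x - y| ∂μ ∂μ) - ∫ x, ∫ y, |x - y| ∂ν ∂ν := by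
  have hμμ := integrable_measureReal_Iic_mul_measureReal_Ioi hμ hμ
  have hνν := integrable_measureReal_Iic_mul_measureReal_Ioi hν hν
  have hμν := integrable_measureReal_Iic_mul_measureReal_Ioi hμ hν
  have hνμ := integrable_measureReal_Iic_mul_measureReal_Ioi hν hμ
  have hIoi (ρ : Measure ℝ) [IsProbabilityMeasure ρ] (t : ℝ) :
      ρ.real (Set.Ioi t) = 1 - ρ.real (Set.Iic t) := by
    rw [← Set.compl_Iic, probReal_compl_eq_one_sub measurableSet_Iic]
  have hsq (t : ℝ) : (μ.real (Set.Iic t) - ν.real (Set.Iic t)) ^ 2 =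
      μ.real (Set.Iic t) * ν.real (Set.Ioi t) + ν.real (Set.Iic t) * μ.real (Set.Ioi t)
        - (μ.real (Set.Iic t) * μ.real (Set.Ioi t) + ν.real (Set.Iic t) * ν.real (Set.Ioi t)) := by
    rw [hIoi μ, hIoi ν]
    ring
  simp only [hsq]
  rw [integral_sub (by fun_prop) (by fun_prop), integral_add hμν hνμ, integral_add hμμ hνν,
    integral_integral_abs_sub hν hμ, integral_integral_abs_sub hμ hμ,
    integral_integral_abs_sub hν hν]
  ring

lemma integral_integral_map {α β γ δ E : Type*} [MeasurableSpace α] [MeasurableSpace β]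
    [MeasurableSpace γ] [MeasurableSpace δ] [NormedAddCommGroup E] [NormedSpace ℝ E]
    {P : Measure α} {Q : Measure β} [SFinite Q] {X : α → γ} {Z : β → δ} (hX : AEMeasurable X P)
    (hZ : AEMeasurable Z Q) {f : γ → δ → E} (hf : StronglyMeasurable (Function.uncurry f)) :
    ∫ x, ∫ z, f x z ∂Q.map Z ∂P.map X = ∫ a, ∫ b, f (X a) (Z b) ∂Q ∂P := by
  rw [integral_map hX hf.integral_prod_right.aestronglyMeasurable]
  congr with a
  exact integral_map hZ (hf.comp_measurable measurable_prodMk_left).aestronglyMeasurable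

section EnergyLoss

variable {𝒰 : Type*} [MeasurableSpace 𝒰]

/-- The energy loss `E[2|y - Z| - |Z - Z'|]` at an observation `y` of a generator `Z` driven by
noise of law `P`. Independence of the copies `Z` and `Z'` is encoded by iterating the integral. -/
noncomputable def energyLoss (P : Measure 𝒰) (Z : 𝒰 → ℝ) (y : ℝ) : ℝ :=
  ∫ u, ∫ u', (2 * |y - Z u| - |Z u - Z u'|) ∂P ∂P

lemma energyLoss_map_id {P : Measure 𝒰} [SFinite P] {Z : 𝒰 → ℝ} (hZ : AEMeasurable Z P) :
    energyLoss (P.map Z) id = energyLoss P Z := by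
  ext y
  exact integral_integral_map (f := fun z z' ↦ 2 * |y - z| - |z - z'|) hZ hZ (by fun_prop)

variable {μ ν : Measure ℝ} [IsProbabilityMeasure μ] [IsProbabilityMeasure ν]

lemma energyLoss_id (hμ : Integrable id μ) (y : ℝ) :
    energyLoss μ id y = 2 * (∫ z, |y - z| ∂μ) - ∫ z, ∫ z', |z - z'| ∂μ ∂μ := by
  have hdist (y : ℝ) : Integrable (fun z ↦ |y - z|) μ := ((integrable_const y).sub hμ).abs
  have hinner (z : ℝ) : ∫ z', (2 * |y - z| - |z - z'|) ∂μ = 2 * |y - z| - ∫ z', |z - z'| ∂μ := by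
    simp [integral_sub (integrable_const _) (hdist z)]
  simp only [energyLoss, id, hinner]
  rw [integral_sub ((hdist y).const_mul 2) (integrable_prod_sub hμ hμ).abs.integral_prod_left,
    integral_const_mul]

lemma integral_energyLoss_id (hμ : Integrable id μ) (hν : Integrable id ν) :
    ∫ y, energyLoss μ id y ∂ν =
      2 * (∫ t, (μ.real (Set.Iic t) - ν.real (Set.Iic t)) ^ 2) + ∫ y, ∫ y', |y - y'| ∂ν ∂ν := by
  have hdist : Integrable (fun y ↦ ∫ z, |y - z| ∂μ) ν :=
    (integrable_prod_sub hν hμ).abs.integral_prod_left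
  simp only [energyLoss_id hμ]
  rw [integral_sub (hdist.const_mul 2) (integrable_const _), integral_const_mul, integral_const,
    probReal_univ, one_smul, two_mul_integral_measureReal_Iic_sub_sq hμ hν, sub_add_cancel]

lemma integral_energyLoss {P : Measure 𝒰} [IsProbabilityMeasure P] {Z : 𝒰 → ℝ}
    (hZ : Integrable Z P) (hν : Integrable id ν) :
    ∫ y, energyLoss P Z y ∂ν =
      2 * (∫ t, (P.real {u | Z u ≤ t} - ν.real (Set.Iic t)) ^ 2)
        + ∫ y, ∫ y', |y - y'| ∂ν ∂ν := by
  have hZm : AEMeasurable Z P := hZ.aemeasurable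
  have : IsProbabilityMeasure (P.map Z) := Measure.isProbabilityMeasure_map hZm
  have hlaw : Integrable id (P.map Z) :=
    (integrable_map_measure aestronglyMeasurable_id hZm).2 hZ
  have hcdf (t : ℝ) : (P.map Z).real (Set.Iic t) = P.real {u | Z u ≤ t} :=
    map_measureReal_apply_of_aemeasurable hZm measurableSet_Iic
  simpa only [energyLoss_map_id hZm, hcdf] using integral_energyLoss_id hlaw hν

end EnergyLoss

section Conditional

variable {𝒳 𝒰 : Type*} [MeasurableSpace 𝒳] [MeasurableSpace 𝒰]

lemma integrable_integral_integral_abs_sub {μ : Measure 𝒳} [SFinite μ] {κ η : Kernel 𝒳 ℝ}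
    [IsMarkovKernel κ] [IsMarkovKernel η] (hκ : Integrable Prod.snd (μ ⊗ₘ κ))
    (hη : Integrable Prod.snd (μ ⊗ₘ η)) :
    Integrable (fun x ↦ ∫ y, ∫ z, |y - z| ∂η x ∂κ x) μ := by
  have hfst : Integrable (fun p : 𝒳 × ℝ × ℝ ↦ p.2.1) (μ ⊗ₘ (κ ×ₖ η)) := by
    rw [← Kernel.fst_prod κ η, Kernel.fst_eq, Measure.compProd_map measurable_fst] at hκ
    exact hκ.comp_measurable (by fun_prop)
  have hsnd : Integrable (fun p : 𝒳 × ℝ × ℝ ↦ p.2.2) (μ ⊗ₘ (κ ×ₖ η)) := by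
    rw [← Kernel.snd_prod κ η, Kernel.snd_eq, Measure.compProd_map measurable_snd] at hη
    exact hη.comp_measurable (by fun_prop)
  have habs : Integrable (fun p : 𝒳 × ℝ × ℝ ↦ |p.2.1 - p.2.2|) (μ ⊗ₘ (κ ×ₖ η)) :=
    (hfst.sub hsnd).abs
  obtain ⟨hsection, hint⟩ := (Measure.integrable_compProd_iff habs.aestronglyMeasurable).1 habs
  refine hint.congr ?_
  filter_upwards [hsection] with x hx
  simp only [Real.norm_eq_abs, abs_abs, Kernel.prod_apply] at hx ⊢
  exact integral_prod _ hx

lemma integrable_energyLoss {μ₀ : Measure (𝒳 × ℝ)} [SFinite μ₀] {P : Measure 𝒰}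
    [IsProbabilityMeasure P] {g : 𝒳 → 𝒰 → ℝ} (hY : Integrable Prod.snd μ₀)
    (hg : Integrable (Function.uncurry g) (μ₀.fst.prod P)) :
    Integrable (fun p ↦ energyLoss P (g p.1) p.2) μ₀ := by
  have hfst : MeasurePreserving Prod.fst μ₀ μ₀.fst := ⟨measurable_fst, rfl⟩
  have hgU : Integrable (fun q : (𝒳 × ℝ) × 𝒰 ↦ g q.1.1 q.2) (μ₀.prod P) :=
    (hfst.prod (.id P)).integrable_comp_of_integrable hg
  have hgU' : Integrable (fun q : ((𝒳 × ℝ) × 𝒰) × 𝒰 ↦ g q.1.1.1 q.2) ((μ₀.prod P).prod P) :=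
    (measurePreserving_fst.prod (.id P)).integrable_comp_of_integrable hgU
  exact (((((hY.comp_fst P).sub hgU).abs.const_mul 2).comp_fst P).sub
    ((hgU.comp_fst P).sub hgU').abs).integral_prod_left.integral_prod_left

theorem energy_loss_population_identity_general
    (μ₀ : Measure (𝒳 × ℝ)) [SFinite μ₀] (κ : Kernel 𝒳 ℝ) [IsMarkovKernel κ] [μ₀.IsCondKernel κ]
    (P : Measure 𝒰) [IsProbabilityMeasure P] (g : 𝒳 → 𝒰 → ℝ)
    (hY : Integrable Prod.snd μ₀) (hg : Integrable (Function.uncurry g) (μ₀.fst.prod P)) :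
    ∫ p, energyLoss P (g p.1) p.2 ∂μ₀ =
      2 * (∫ x, (∫ t, (P.real {u | g x u ≤ t} - (κ x).real (Set.Iic t)) ^ 2) ∂μ₀.fst)
        + ∫ x, ∫ y, ∫ y', |y - y'| ∂κ x ∂κ x ∂μ₀.fst := by
  have hdis : μ₀.fst ⊗ₘ κ = μ₀ := μ₀.disintegrate κ
  have hYκ : Integrable Prod.snd (μ₀.fst ⊗ₘ κ) := hdis.symm ▸ hY
  have hloss := integrable_energyLoss hY hg
  rw [← hdis] at hloss
  have hlossX : Integrable (fun x ↦ ∫ y, energyLoss P (g x) y ∂κ x) μ₀.fst :=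
    hloss.integral_compProd (a := ())
  have hcond : ∀ᵐ x ∂μ₀.fst,
      2 * (∫ t, (P.real {u | g x u ≤ t} - (κ x).real (Set.Iic t)) ^ 2) =
        (∫ y, energyLoss P (g x) y ∂κ x) - ∫ y, ∫ y', |y - y'| ∂κ x ∂κ x := by
    filter_upwards [hg.prod_right_ae, hYκ.ae_of_compProd] with x hgx hYx
    exact eq_sub_of_add_eq (integral_energyLoss hgx hYx).symm
  rw [← integral_const_mul, integral_congr_ae hcond,
    integral_sub hlossX (integrable_integral_integral_abs_sub hYκ hYκ), sub_add_cancel,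
    ← Measure.integral_compProd hloss, hdis]

end Conditional

/-- **Population energy-loss identity for conditional distributions.**
For a pair `(X, Y) ∼ μ₀` on a standard Borel space `𝒳 × ℝ` with `|Y| ≤ c₀` a.s.,
i.i.d. noise `U, U' ∼ μᵤ` independent of `(X,Y)`, and a bounded measurable
generator `g`, we have
`E[2|Y − g(X,U)| − |g(X,U) − g(X,U')|]
  = 2 ∫∫ (F_g(x,t) − F*(x,t))² dt dμ_X(x) + ∫ ∬ |y − y'| F*(x,dy) F*(x,dy') dμ_X(x)`,
where `F_g(x,t) = μᵤ{u : g(x,u) ≤ t}` and `F*(x,·)` is the regular conditional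
distribution of `Y` given `X = x` (here `μ₀.condKernel`). Independence of the
noise from `(X,Y)` is expressed by writing the expectation as an iterated
integral against `μ₀` and two copies of `μᵤ`. -/
theorem energy_loss_population_identity
    {𝒳 𝒰 : Type*} [MeasurableSpace 𝒳] [StandardBorelSpace 𝒳] [MeasurableSpace 𝒰]
    (μ₀ : Measure (𝒳 × ℝ)) [IsProbabilityMeasure μ₀]
    (μu : Measure 𝒰) [IsProbabilityMeasure μu]
    (c₀ : ℝ) (hc₀ : 0 < c₀) (hYbdd : ∀ᵐ p ∂μ₀, |p.2| ≤ c₀)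
    (g : 𝒳 → 𝒰 → ℝ) (hg : Measurable (Function.uncurry g))
    (M : ℝ) (hgbdd : ∀ x u, |g x u| ≤ M) :
    (∫ p, (∫ u, (∫ u', (2 * |p.2 - g p.1 u| - |g p.1 u - g p.1 u'|) ∂μu) ∂μu) ∂μ₀)
      = 2 * (∫ x, (∫ t : ℝ,
            ((μu {u | g x u ≤ t}).toReal - ((μ₀.condKernel x) (Set.Iic t)).toReal) ^ 2)
            ∂μ₀.fst)
        + ∫ x, (∫ y, (∫ y', |y - y'| ∂μ₀.condKernel x) ∂μ₀.condKernel x) ∂μ₀.fst := by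
  have hY : Integrable Prod.snd μ₀ := .of_bound measurable_snd.aestronglyMeasurable c₀ hYbdd
  have hgX : Integrable (Function.uncurry g) (μ₀.fst.prod μu) :=
    .of_bound hg.aestronglyMeasurable M (.of_forall fun p ↦ hgbdd p.1 p.2)
  exact energy_loss_population_identity_general μ₀ μ₀.condKernel μu g hY hgX
end

section
/- Let c₀ > 0 and let μ_u be a probability measure on [0, 1]. Let 𝒢 be a set of measurable functions g : [0,1]^d × [0,1] → [−c₀, c₀], and for g, g̃ ∈ 𝒢 define v_{g,g̃}(x) = ∫_ℝ (F_g(x, t) − F_{g̃}(x, t))² dt, where F_g(x, t) = μ_u({u : g(x, u) ≤ t}). Suppose {g₁, …, g_N} ⊆ 𝒢 is an ε*-net of 𝒢 in the sup norm, i.e., for every g ∈ 𝒢 there exists π(g) ∈ {g₁, …, g_N} with sup_{(x,u)} |g(x, u) − π(g)(x, u)| ≤ ε*. Then for all g, g̃ ∈ 𝒢 and all x ∈ [0,1]^d, |v_{g,g̃}(x) − v_{π(g),π(g̃)}(x)| ≤ 17·√(c₀·ε*). -/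
open MeasureTheory

/-- The induced conditional CDF `F_g(x, t) = μᵤ({u : g(x,u) ≤ t})` of a generator
`g : [0,1]^d × [0,1] → ℝ` under a noise distribution `μᵤ` on `[0,1]`. -/
noncomputable def inducedCDF {d : ℕ} (μu : Measure (Set.Icc (0:ℝ) 1))
    (g : (Fin d → Set.Icc (0:ℝ) 1) → Set.Icc (0:ℝ) 1 → ℝ)
    (x : Fin d → Set.Icc (0:ℝ) 1) (t : ℝ) : ℝ :=
  (μu {u | g x u ≤ t}).toReal

/-!
For random variables `f`, `h` on one probability space, `|F_f(t) - F_h(t)|` is at most the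
probability that `t` separates `f` from `h`; integrating over `t`, Tonelli gives
`∫ |F_f - F_h| ≤ 𝔼|f - h|`. Since distribution functions take values in `[0, 1]`, this controls the
squared distance `v` twice: `0 ≤ v_{f,f'} ≤ 𝔼|f - f'|`, and
`|v_{f,f'} - v_{h,h'}| ≤ 2 (𝔼|f - h| + 𝔼|f' - h'|)`. Under the hypotheses of the theorem the
difference is therefore at most `2 c₀` as well as at most `4 ε*`, hence at most the geometric mean
`√(8 c₀ ε*)`.
-/

open ProbabilityTheory Set
open scoped symmDiff

/-- The squared Cramér distance `∫ (F_μ(t) - F_ν(t))² dt` between two probability measures on `ℝ`.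
It is `0` by convention when the integrand is not integrable, which does not happen for measures
with finite first moment. -/
noncomputable def cramerDistSq (μ ν : Measure ℝ) : ℝ :=
  ∫ t, (cdf μ t - cdf ν t) ^ 2

section UnitInterval

variable {p q p' q' : ℝ}

lemma abs_sub_le_one_of_mem_Icc (hp : p ∈ Icc 0 1) (hq : q ∈ Icc 0 1) : |p - q| ≤ 1 := by
  simpa using abs_sub_le_of_le_of_le hp.1 hp.2 hq.1 hq.2

lemma abs_sq_sub_sub_sq_sub_le (hp : p ∈ Icc 0 1) (hq : q ∈ Icc 0 1) (hp' : p' ∈ Icc 0 1)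
    (hq' : q' ∈ Icc 0 1) :
    |(p - q) ^ 2 - (p' - q') ^ 2| ≤ 2 * (|p - p'| + |q - q'|) := by
  have sum_le : |(p - q) + (p' - q')| ≤ 2 := by
    linarith [abs_add_le (p - q) (p' - q'), abs_sub_le_one_of_mem_Icc hp hq,
      abs_sub_le_one_of_mem_Icc hp' hq']
  have diff_le : |(p - q) - (p' - q')| ≤ |p - p'| + |q - q'| := by
    rw [sub_sub_sub_comm]
    exact abs_sub _ _
  rw [sq_sub_sq, abs_mul]
  gcongr

end UnitInterval

section CDF

variable (μ ν : Measure ℝ)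

lemma cdf_mem_Icc (t : ℝ) : cdf μ t ∈ Icc 0 1 :=
  ⟨cdf_nonneg μ t, cdf_le_one μ t⟩

lemma cramerDistSq_nonneg : 0 ≤ cramerDistSq μ ν :=
  integral_nonneg fun _ ↦ sq_nonneg _

lemma sq_cdf_sub_cdf_le_abs (t : ℝ) : (cdf μ t - cdf ν t) ^ 2 ≤ |cdf μ t - cdf ν t| := by
  rw [← sq_abs]
  exact pow_le_of_le_one (abs_nonneg _)
    (abs_sub_le_one_of_mem_Icc (cdf_mem_Icc μ t) (cdf_mem_Icc ν t)) two_ne_zero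

lemma measurable_cdf_sub_cdf : Measurable fun t ↦ cdf μ t - cdf ν t :=
  (monotone_cdf μ).measurable.sub (monotone_cdf ν).measurable

variable {μ ν} {μ' ν' : Measure ℝ}

lemma integrable_sq_cdf_sub_cdf (h : Integrable fun t ↦ cdf μ t - cdf ν t) :
    Integrable fun t ↦ (cdf μ t - cdf ν t) ^ 2 := by
  refine h.abs.mono' ((measurable_cdf_sub_cdf μ ν).pow_const 2).aestronglyMeasurable ?_
  filter_upwards with t
  rw [Real.norm_of_nonneg (sq_nonneg _)]
  exact sq_cdf_sub_cdf_le_abs μ ν t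

lemma cramerDistSq_le_integral_abs (h : Integrable fun t ↦ cdf μ t - cdf ν t) :
    cramerDistSq μ ν ≤ ∫ t, |cdf μ t - cdf ν t| :=
  integral_mono (integrable_sq_cdf_sub_cdf h) h.abs (sq_cdf_sub_cdf_le_abs μ ν)

lemma abs_cramerDistSq_sub_le_integral_abs (hμν : Integrable fun t ↦ cdf μ t - cdf ν t)
    (hμ : Integrable fun t ↦ cdf μ t - cdf μ' t) (hν : Integrable fun t ↦ cdf ν t - cdf ν' t) :
    |cramerDistSq μ ν - cramerDistSq μ' ν'| ≤
      2 * ((∫ t, |cdf μ t - cdf μ' t|) + ∫ t, |cdf ν t - cdf ν' t|) := by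
  have hμν' : Integrable fun t ↦ cdf μ' t - cdf ν' t :=
    ((hμν.sub hμ).add hν).congr (.of_forall fun t ↦ by simp)
  rw [cramerDistSq, cramerDistSq,
    ← integral_sub (integrable_sq_cdf_sub_cdf hμν) (integrable_sq_cdf_sub_cdf hμν'),
    ← integral_add hμ.abs hν.abs, ← integral_const_mul, ← Real.norm_eq_abs]
  refine norm_integral_le_of_norm_le ((hμ.abs.add hν.abs).const_mul 2) ?_
  filter_upwards with t
  exact abs_sq_sub_sub_sq_sub_le (cdf_mem_Icc μ t) (cdf_mem_Icc ν t) (cdf_mem_Icc μ' t)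
    (cdf_mem_Icc ν' t)

end CDF

section RandomVariables

lemma mem_symmDiff_setOf_le_iff {Ω : Type*} {f h : Ω → ℝ} (u : Ω) (t : ℝ) :
    u ∈ {u | f u ≤ t} ∆ {u | h u ≤ t} ↔ t ∈ Ico (min (f u) (h u)) (max (f u) (h u)) := by
  simp only [mem_symmDiff, mem_ofPred_eq, mem_Ico, min_le_iff, lt_max_iff]
  grind

variable {Ω : Type*} [MeasurableSpace Ω] {μ : Measure Ω} {f h f' h' : Ω → ℝ}

lemma lintegral_measure_symmDiff_setOf_le_s7 [SFinite μ] (hf : Measurable f) (hh : Measurable h) :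
    ∫⁻ t, μ ({u | f u ≤ t} ∆ {u | h u ≤ t}) = ∫⁻ u, ‖f u - h u‖ₑ ∂μ := by
  let between : Set (ℝ × Ω) := {p | p.2 ∈ {u | f u ≤ p.1} ∆ {u | h u ≤ p.1}}
  have measurableSet_between : MeasurableSet between :=
    (measurableSet_le (hf.comp measurable_snd) measurable_fst).symmDiff
      (measurableSet_le (hh.comp measurable_snd) measurable_fst)
  have volume_section (u : Ω) : volume ((fun t ↦ (t, u)) ⁻¹' between) = ‖f u - h u‖ₑ := by
    have section_eq : (fun t ↦ (t, u)) ⁻¹' between = Ico (min (f u) (h u)) (max (f u) (h u)) :=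
      ext (mem_symmDiff_setOf_le_iff u)
    rw [section_eq, Real.volume_Ico, max_sub_min_eq_abs', Real.enorm_eq_ofReal_abs]
  calc ∫⁻ t, μ ({u | f u ≤ t} ∆ {u | h u ≤ t})
      = (volume.prod μ) between := (Measure.prod_apply measurableSet_between).symm
    _ = ∫⁻ u, volume ((fun t ↦ (t, u)) ⁻¹' between) ∂μ :=
      Measure.prod_apply_symm measurableSet_between
    _ = ∫⁻ u, ‖f u - h u‖ₑ ∂μ := lintegral_congr volume_section

variable [IsProbabilityMeasure μ]

lemma cdf_map_eq_measureReal_s7 (hf : Measurable f) (t : ℝ) :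
    cdf (μ.map f) t = μ.real {u | f u ≤ t} := by
  have := Measure.isProbabilityMeasure_map (μ := μ) hf.aemeasurable
  rw [cdf_eq_real, map_measureReal_apply hf measurableSet_Iic]
  rfl

lemma enorm_cdf_map_sub_le (hf : Measurable f) (hh : Measurable h) (t : ℝ) :
    ‖cdf (μ.map f) t - cdf (μ.map h) t‖ₑ ≤ μ ({u | f u ≤ t} ∆ {u | h u ≤ t}) := by
  rw [cdf_map_eq_measureReal_s7 hf, cdf_map_eq_measureReal_s7 hh, Real.enorm_eq_ofReal_abs]
  refine ENNReal.ofReal_le_of_le_toReal (abs_measureReal_sub_le_measureReal_symmDiff ?_ ?_)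
  · exact (measurableSet_le hf measurable_const).nullMeasurableSet
  · exact (measurableSet_le hh measurable_const).nullMeasurableSet

lemma lintegral_enorm_cdf_map_sub_le (hf : AEMeasurable f μ) (hh : AEMeasurable h μ) :
    ∫⁻ t, ‖cdf (μ.map f) t - cdf (μ.map h) t‖ₑ ≤ ∫⁻ u, ‖f u - h u‖ₑ ∂μ := by
  have enorm_ae_eq : (fun u ↦ ‖hf.mk f u - hh.mk h u‖ₑ) =ᵐ[μ] fun u ↦ ‖f u - h u‖ₑ := by
    filter_upwards [hf.ae_eq_mk, hh.ae_eq_mk] with u hfu hhu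
    rw [hfu, hhu]
  rw [Measure.map_congr hf.ae_eq_mk, Measure.map_congr hh.ae_eq_mk,
    ← lintegral_congr_ae enorm_ae_eq,
    ← lintegral_measure_symmDiff_setOf_le_s7 hf.measurable_mk hh.measurable_mk]
  exact lintegral_mono (enorm_cdf_map_sub_le hf.measurable_mk hh.measurable_mk)

lemma integrable_cdf_map_sub (hf : Integrable f μ) (hh : Integrable h μ) :
    Integrable fun t ↦ cdf (μ.map f) t - cdf (μ.map h) t :=
  ⟨(measurable_cdf_sub_cdf _ _).aestronglyMeasurable,
    (lintegral_enorm_cdf_map_sub_le hf.aemeasurable hh.aemeasurable).trans_lt (hf.sub hh).2⟩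

lemma integral_abs_cdf_map_sub_le (hf : Integrable f μ) (hh : Integrable h μ) :
    ∫ t, |cdf (μ.map f) t - cdf (μ.map h) t| ≤ ∫ u, |f u - h u| ∂μ := by
  have integrable_sub : Integrable (fun u ↦ f u - h u) μ := hf.sub hh
  simp only [← Real.norm_eq_abs]
  rw [integral_norm_eq_lintegral_enorm (integrable_cdf_map_sub hf hh).1,
    integral_norm_eq_lintegral_enorm integrable_sub.1]
  exact ENNReal.toReal_mono integrable_sub.2.ne
    (lintegral_enorm_cdf_map_sub_le hf.aemeasurable hh.aemeasurable)

lemma cramerDistSq_map_le (hf : Integrable f μ) (hh : Integrable h μ) :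
    cramerDistSq (μ.map f) (μ.map h) ≤ ∫ u, |f u - h u| ∂μ :=
  (cramerDistSq_le_integral_abs (integrable_cdf_map_sub hf hh)).trans
    (integral_abs_cdf_map_sub_le hf hh)

lemma abs_cramerDistSq_map_sub_le (hf : Integrable f μ) (hf' : Integrable f' μ)
    (hh : Integrable h μ) (hh' : Integrable h' μ) :
    |cramerDistSq (μ.map f) (μ.map f') - cramerDistSq (μ.map h) (μ.map h')| ≤
      2 * ((∫ u, |f u - h u| ∂μ) + ∫ u, |f' u - h' u| ∂μ) := by
  refine (abs_cramerDistSq_sub_le_integral_abs (integrable_cdf_map_sub hf hf')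
    (integrable_cdf_map_sub hf hh) (integrable_cdf_map_sub hf' hh')).trans ?_
  gcongr
  · exact integral_abs_cdf_map_sub_le hf hh
  · exact integral_abs_cdf_map_sub_le hf' hh'

lemma integral_abs_le_of_forall_abs_le {C : ℝ} (hC : ∀ u, |f u| ≤ C) : ∫ u, |f u| ∂μ ≤ C := by
  refine (le_abs_self _).trans ?_
  simpa using norm_integral_le_of_norm_le_const (μ := μ) (f := fun u ↦ |f u|)
    (.of_forall fun u ↦ by simpa using hC u)

theorem squared_cdf_distance_net_stability_general {R ε : ℝ}
    (hf : Integrable f μ) (hf' : Integrable f' μ) (hh : Integrable h μ) (hh' : Integrable h' μ)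
    (hff' : ∫ u, |f u - f' u| ∂μ ≤ R) (hhh' : ∫ u, |h u - h' u| ∂μ ≤ R)
    (hfh : ∫ u, |f u - h u| ∂μ ≤ ε) (hfh' : ∫ u, |f' u - h' u| ∂μ ≤ ε) :
    |cramerDistSq (μ.map f) (μ.map f') - cramerDistSq (μ.map h) (μ.map h')| ≤
      2 * √(R * ε) := by
  set D := |cramerDistSq (μ.map f) (μ.map f') - cramerDistSq (μ.map h) (μ.map h')|
  have D_le_R : D ≤ R := abs_sub_le_of_nonneg_of_le
    (cramerDistSq_nonneg _ _) ((cramerDistSq_map_le hf hf').trans hff')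
    (cramerDistSq_nonneg _ _) ((cramerDistSq_map_le hh hh').trans hhh')
  have D_le_four_mul : D ≤ 4 * ε := by
    linarith [abs_cramerDistSq_map_sub_le hf hf' hh hh']
  have D_nonneg : 0 ≤ D := abs_nonneg _
  have D_half_sq_le : (D / 2) ^ 2 ≤ R * ε := by
    linarith [mul_le_mul D_le_R D_le_four_mul D_nonneg (D_nonneg.trans D_le_R)]
  linarith [Real.le_sqrt_of_sq_le D_half_sq_le]

end RandomVariables

lemma integral_sq_inducedCDF_sub_eq_cramerDistSq {d : ℕ} {μu : Measure (Icc (0 : ℝ) 1)}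
    [IsProbabilityMeasure μu] {g g' : (Fin d → Icc (0 : ℝ) 1) → Icc (0 : ℝ) 1 → ℝ}
    {x : Fin d → Icc (0 : ℝ) 1} (hg : Measurable (g x)) (hg' : Measurable (g' x)) :
    ∫ t, (inducedCDF μu g x t - inducedCDF μu g' x t) ^ 2 =
      cramerDistSq (μu.map (g x)) (μu.map (g' x)) := by
  simp only [cramerDistSq, cdf_map_eq_measureReal_s7 hg, cdf_map_eq_measureReal_s7 hg']
  rfl

/-- **Net stability of the squared-CDF-distance functional.** If `{g₁, …, g_N}` is an
`ε*`-net (in sup norm) of a class `𝒢` of measurable functions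
`g : [0,1]^d × [0,1] → [−c₀, c₀]`, with `π` mapping each `g ∈ 𝒢` to a net element
within sup-distance `ε*`, then the functional
`v_{g,g'}(x) = ∫ (F_g(x,t) − F_{g'}(x,t))² dt` satisfies
`|v_{g,g'}(x) − v_{π(g),π(g')}(x)| ≤ 17 √(c₀ ε*)` for all `g, g' ∈ 𝒢` and all `x`. -/
theorem squared_cdf_distance_net_stability {d : ℕ}
    (c₀ : ℝ) (hc₀ : 0 < c₀)
    (μu : Measure (Set.Icc (0:ℝ) 1)) [IsProbabilityMeasure μu]
    (𝒢 : Set ((Fin d → Set.Icc (0:ℝ) 1) → Set.Icc (0:ℝ) 1 → ℝ))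
    (hmeas : ∀ g ∈ 𝒢, Measurable (Function.uncurry g))
    (hbdd : ∀ g ∈ 𝒢, ∀ x u, |g x u| ≤ c₀)
    (εstar : ℝ) (hεstar : 0 < εstar)
    (S : Finset ((Fin d → Set.Icc (0:ℝ) 1) → Set.Icc (0:ℝ) 1 → ℝ))
    (hS : ↑S ⊆ 𝒢)
    (π : ((Fin d → Set.Icc (0:ℝ) 1) → Set.Icc (0:ℝ) 1 → ℝ) →
         ((Fin d → Set.Icc (0:ℝ) 1) → Set.Icc (0:ℝ) 1 → ℝ))
    (hπS : ∀ g ∈ 𝒢, π g ∈ S)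
    (hπnet : ∀ g ∈ 𝒢, ∀ x u, |g x u - π g x u| ≤ εstar) :
    ∀ g ∈ 𝒢, ∀ g' ∈ 𝒢, ∀ x,
      |(∫ t : ℝ, (inducedCDF μu g x t - inducedCDF μu g' x t) ^ 2) -
       (∫ t : ℝ, (inducedCDF μu (π g) x t - inducedCDF μu (π g') x t) ^ 2)|
        ≤ 17 * Real.sqrt (c₀ * εstar) := by
  intro g hg g' hg' x
  have net_subset {k} (hk : k ∈ 𝒢) : π k ∈ 𝒢 := hS (hπS k hk)
  have measurable {k} (hk : k ∈ 𝒢) : Measurable (k x) := (hmeas k hk).of_uncurry_left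
  have integrable {k} (hk : k ∈ 𝒢) : Integrable (k x) μu :=
    .of_bound (measurable hk).aestronglyMeasurable c₀ (.of_forall (hbdd k hk x))
  have L1_diam {k k'} (hk : k ∈ 𝒢) (hk' : k' ∈ 𝒢) : ∫ u, |k x u - k' x u| ∂μu ≤ 2 * c₀ :=
    integral_abs_le_of_forall_abs_le fun u ↦ by
      linarith [abs_sub (k x u) (k' x u), hbdd k hk x u, hbdd k' hk' x u]
  have L1_net {k} (hk : k ∈ 𝒢) : ∫ u, |k x u - π k x u| ∂μu ≤ εstar :=
    integral_abs_le_of_forall_abs_le (hπnet k hk x)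
  rw [integral_sq_inducedCDF_sub_eq_cramerDistSq (measurable hg) (measurable hg'),
    integral_sq_inducedCDF_sub_eq_cramerDistSq (measurable (net_subset hg))
      (measurable (net_subset hg'))]
  calc _ ≤ 2 * √(2 * c₀ * εstar) :=
        squared_cdf_distance_net_stability_general (integrable hg) (integrable hg')
          (integrable (net_subset hg)) (integrable (net_subset hg')) (L1_diam hg hg')
          (L1_diam (net_subset hg) (net_subset hg')) (L1_net hg) (L1_net hg')
    _ = 2 * √2 * √(c₀ * εstar) := by rw [mul_assoc 2 c₀, Real.sqrt_mul zero_le_two, mul_assoc]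
    _ ≤ 17 * √(c₀ * εstar) := by
        gcongr
        linarith [Real.sqrt_two_lt_three_halves]
end

section
/- Let X and Z be real-valued random variables with CDFs F_X and F_Z, where F_X is continuous and Lipschitz with constant c₁ (i.e., |F_X(y₁) − F_X(y₂)| ≤ c₁|y₁ − y₂| for all y₁, y₂). Let Q_X(α) = inf{t : F_X(t) ≥ α} and Q_Z(α) = inf{t : F_Z(t) ≥ α} denote the quantile functions, and suppose sup_{α ∈ (0,1)} |Q_X(α) − Q_Z(α)| ≤ δ. Then sup_{y ∈ ℝ} |F_X(y) − F_Z(y)| ≤ c₁·δ. -/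
open MeasureTheory ProbabilityTheory

/-!
For `0 < α < 1` right-continuity of the CDF gives the Galois connection `Q α ≤ y ↔ α ≤ F y`.
It turns the one-sided bound `Q_X ≤ Q_Z + δ` into the shifted inequality `F_Z y ≤ F_X (y + δ)`.
Applying this in both directions yields `F_X (y - δ) ≤ F_Z y ≤ F_X (y + δ)`, and the Lipschitz
bound says that both ends lie within `c₁ * δ` of `F_X y`.
-/

section Quantile

variable {μ ν : Measure ℝ} {α δ : ℝ}

/-- The `α`-quantile of a probability measure `μ` on `ℝ`, as the generalized inverse of its CDF.
Outside `0 < α < 1` the set may be empty or unbounded below, and the infimum is then `0`. -/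
noncomputable def quantile (μ : Measure ℝ) (α : ℝ) : ℝ :=
  sInf {t | α ≤ cdf μ t}

lemma nonempty_setOf_le_cdf (μ : Measure ℝ) (hα : α < 1) : {t | α ≤ cdf μ t}.Nonempty :=
  ((tendsto_cdf_atTop μ).eventually_const_le hα).exists

lemma bddBelow_setOf_le_cdf (μ : Measure ℝ) (hα : 0 < α) : BddBelow {t | α ≤ cdf μ t} := by
  obtain ⟨b, hb⟩ := ((tendsto_cdf_atBot μ).eventually_lt_const hα).exists
  exact ⟨b, fun t ht ↦ ((monotone_cdf μ).reflect_lt (hb.trans_le ht)).le⟩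

lemma le_cdf_quantile (μ : Measure ℝ) (hα : α ∈ Set.Ioo 0 1) : α ≤ cdf μ (quantile μ α) := by
  have hne := nonempty_setOf_le_cdf μ hα.2
  have hglb : IsGLB {t | α ≤ cdf μ t} (quantile μ α) :=
    isGLB_csInf hne (bddBelow_setOf_le_cdf μ hα.1)
  exact ge_of_tendsto_of_frequently ((cdf μ).right_continuous _) (hglb.frequently_mem hne)

lemma quantile_le_iff_le_cdf (μ : Measure ℝ) (hα : α ∈ Set.Ioo 0 1) {y : ℝ} :
    quantile μ α ≤ y ↔ α ≤ cdf μ y :=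
  ⟨fun h ↦ (le_cdf_quantile μ hα).trans (monotone_cdf μ h),
    fun h ↦ csInf_le (bddBelow_setOf_le_cdf μ hα.1) h⟩

lemma cdf_le_cdf_add_of_quantile_le
    (hQ : ∀ α ∈ Set.Ioo (0 : ℝ) 1, quantile μ α ≤ quantile ν α + δ) (y : ℝ) :
    cdf ν y ≤ cdf μ (y + δ) := by
  refine le_of_forall_lt_imp_le_of_dense fun α hαν ↦ ?_
  rcases le_or_gt α 0 with hα₀ | hα₀
  · exact hα₀.trans (cdf_nonneg μ _)
  · have hα : α ∈ Set.Ioo 0 1 := ⟨hα₀, hαν.trans_le (cdf_le_one ν y)⟩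
    have hνy : quantile ν α ≤ y := (quantile_le_iff_le_cdf ν hα).2 hαν.le
    exact (quantile_le_iff_le_cdf μ hα).1 ((hQ α hα).trans (by gcongr))

theorem cdf_close_of_quantiles_close_general (μ ν : Measure ℝ) (c δ : ℝ)
    (hLip : ∀ y₁ y₂ : ℝ, |cdf μ y₁ - cdf μ y₂| ≤ c * |y₁ - y₂|)
    (hQ : ∀ α ∈ Set.Ioo (0 : ℝ) 1, |quantile μ α - quantile ν α| ≤ δ) (y : ℝ) :
    |cdf μ y - cdf ν y| ≤ c * δ := by
  have hδ : 0 ≤ δ := (abs_nonneg _).trans (hQ (1 / 2) (by norm_num))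
  have hupper : cdf ν y ≤ cdf μ (y + δ) :=
    cdf_le_cdf_add_of_quantile_le (fun α hα ↦ by linarith [(abs_le.1 (hQ α hα)).2]) y
  have hlower : cdf μ (y - δ) ≤ cdf ν y := by
    simpa only [sub_add_cancel] using cdf_le_cdf_add_of_quantile_le (μ := ν) (ν := μ) (δ := δ)
      (fun α hα ↦ by linarith [(abs_le.1 (hQ α hα)).1]) (y - δ)
  have hright : cdf μ (y + δ) - cdf μ y ≤ c * δ := by
    simpa only [add_sub_cancel_left, abs_of_nonneg hδ] using (le_abs_self _).trans (hLip (y + δ) y)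
  have hleft : cdf μ y - cdf μ (y - δ) ≤ c * δ := by
    simpa only [sub_sub_cancel, abs_of_nonneg hδ] using (le_abs_self _).trans (hLip y (y - δ))
  exact abs_le.2 ⟨by linarith, by linarith⟩

end Quantile

lemma cdf_map_apply {Ω : Type*} [MeasurableSpace Ω] {P : Measure Ω} [IsProbabilityMeasure P]
    {X : Ω → ℝ} (hX : AEMeasurable X P) (t : ℝ) :
    cdf (P.map X) t = (P {ω | X ω ≤ t}).toReal := by
  have := Measure.isProbabilityMeasure_map hX
  rw [cdf_eq_real, map_measureReal_apply_of_aemeasurable hX measurableSet_Iic]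
  rfl

/-- If the CDF `F_X` of `X` is (continuous and) Lipschitz with constant `c₁`, and the
quantile functions of `X` and `Z` are uniformly `δ`-close on `(0,1)`, then the CDFs
of `X` and `Z` are uniformly `c₁ δ`-close. -/
theorem cdf_close_of_quantiles_close
    {Ω : Type*} [MeasureSpace Ω] [IsProbabilityMeasure (ℙ : Measure Ω)]
    (X Z : Ω → ℝ) (hX : Measurable X) (hZ : Measurable Z)
    (c₁ δ : ℝ)
    (hLip : ∀ y₁ y₂ : ℝ,
      |(ℙ {ω | X ω ≤ y₁}).toReal - (ℙ {ω | X ω ≤ y₂}).toReal| ≤ c₁ * |y₁ - y₂|)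
    (hQ : ∀ α ∈ Set.Ioo (0:ℝ) 1,
      |sInf {t : ℝ | α ≤ (ℙ {ω | X ω ≤ t}).toReal} -
       sInf {t : ℝ | α ≤ (ℙ {ω | Z ω ≤ t}).toReal}| ≤ δ) :
    ∀ y : ℝ, |(ℙ {ω | X ω ≤ y}).toReal - (ℙ {ω | Z ω ≤ y}).toReal| ≤ c₁ * δ := by
  simp only [← cdf_map_apply hX.aemeasurable, ← cdf_map_apply hZ.aemeasurable] at hLip hQ ⊢
  exact cdf_close_of_quantiles_close_general _ _ c₁ δ hLip hQ
end

section
/- Let c₀ > 0 and let X and Y be real-valued random variables with |X| ≤ c₀ and |Y| ≤ c₀ almost surely, with CDFs F and G respectively. Let w : ℝ → ℝ be continuously differentiable. Then |E[w(X)] − E[w(Y)]|² ≤ (∫_{−c₀}^{c₀} |w'(y)|² dy) · (∫_{−c₀}^{c₀} (F(y) − G(y))² dy). -/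
open MeasureTheory ProbabilityTheory

/-!
For `w` absolutely continuous on `[a, b]` and `x ∈ [a, b]`, the fundamental theorem of calculus
gives `w b - w x = ∫_a^b 1{x ≤ y} w'(y) dy`. Substituting `x = X ω` and integrating over `ω`,
Fubini turns the indicator into the distribution function `F` of `X`:
`E[w(X)] = w b - ∫_a^b w' F`. Subtracting the same formula for `Y`, with distribution function `G`,
the boundary terms cancel, and Cauchy–Schwarz bounds `∫_a^b w' (G - F)`.
-/

section CauchySchwarz

variable {α : Type*} {mα : MeasurableSpace α} {μ : Measure α} {f g : α → ℝ}

lemma inner_toLp_eq_integral_mul (hf : MemLp f 2 μ) (hg : MemLp g 2 μ) :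
    inner ℝ (hf.toLp f) (hg.toLp g) = ∫ x, f x * g x ∂μ := by
  rw [L2.inner_def]
  refine integral_congr_ae ?_
  filter_upwards [hf.coeFn_toLp, hg.coeFn_toLp] with x hfx hgx
  simp only [hfx, hgx, RCLike.inner_apply', conj_trivial]

lemma sq_integral_mul_le_integral_sq_mul_integral_sq (hf : MemLp f 2 μ) (hg : MemLp g 2 μ) :
    (∫ x, f x * g x ∂μ) ^ 2 ≤ (∫ x, f x ^ 2 ∂μ) * ∫ x, g x ^ 2 ∂μ := by
  simpa only [inner_toLp_eq_integral_mul, ← sq] using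
    real_inner_mul_inner_self_le (hf.toLp f) (hg.toLp g)

end CauchySchwarz

section DistributionFunction

variable {Ω : Type*} {mΩ : MeasurableSpace Ω} {μ : Measure Ω} [IsFiniteMeasure μ] {X : Ω → ℝ}

variable (μ X) in
lemma memLp_measureReal_le_restrict (p : ENNReal) {ν : Measure ℝ} [IsFiniteMeasureOnCompacts ν]
    {s : Set ℝ} (hs : IsCompact s) :
    MemLp (fun y ↦ μ.real {ω | X ω ≤ y}) p (ν.restrict s) := by
  have mono : Monotone fun y ↦ μ.real {ω | X ω ≤ y} :=
    fun _ _ hxy ↦ measureReal_mono fun _ hω ↦ le_trans hω hxy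
  exact (mono.monotoneOn s).memLp_isCompact hs

lemma integrable_indicator_Ici_prod (hX : AEMeasurable X μ) {ν : Measure ℝ} [SFinite ν]
    {g : ℝ → ℝ} (hg : Integrable g ν) :
    Integrable (fun p : Ω × ℝ ↦ (Set.Ici (X p.1)).indicator g p.2) (μ.prod ν) :=
  (hg.comp_snd μ).indicator₀ (nullMeasurableSet_le hX.comp_fst measurable_snd.aemeasurable)

lemma integral_integral_indicator_Ici (hX : AEMeasurable X μ) {ν : Measure ℝ} [SFinite ν]
    {g : ℝ → ℝ} (hg : Integrable g ν) :
    ∫ ω, ∫ y, (Set.Ici (X ω)).indicator g y ∂ν ∂μ = ∫ y, g y * μ.real {ω | X ω ≤ y} ∂ν := by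
  rw [integral_integral_swap (integrable_indicator_Ici_prod hX hg)]
  congr! 2 with y
  calc ∫ ω, (Set.Ici (X ω)).indicator g y ∂μ
      = ∫ ω, {ω | X ω ≤ y}.indicator (fun _ ↦ g y) ω ∂μ := rfl
    _ = g y * μ.real {ω | X ω ≤ y} := by
      rw [integral_indicator₀ (nullMeasurableSet_le hX aemeasurable_const), setIntegral_const,
        smul_eq_mul, mul_comm]

end DistributionFunction

section AbsolutelyContinuous

variable {w : ℝ → ℝ} {a b : ℝ}

lemma integrableOn_Icc_deriv_of_absolutelyContinuousOnInterval
    (hw : AbsolutelyContinuousOnInterval w a b) : IntegrableOn (deriv w) (Set.Icc a b) :=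
  ((intervalIntegrable_iff').mp hw.intervalIntegrable_deriv).mono_set Set.Icc_subset_uIcc

lemma setIntegral_Icc_indicator_Ici_deriv (hw : AbsolutelyContinuousOnInterval w a b)
    {x : ℝ} (hx : x ∈ Set.Icc a b) :
    ∫ y in Set.Icc a b, (Set.Ici x).indicator (deriv w) y = w b - w x := by
  have hwx : AbsolutelyContinuousOnInterval w x b :=
    hw.mono (Set.uIcc_subset_uIcc_right (Set.Icc_subset_uIcc hx))
  have inter_eq : Set.Icc a b ∩ Set.Ici x = Set.Icc x b := by
    rw [← Set.Ici_inter_Iic, Set.inter_right_comm, Set.Ici_inter_Ici, sup_eq_right.mpr hx.1,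
      Set.Ici_inter_Iic]
  rw [setIntegral_indicator measurableSet_Ici, inter_eq, integral_Icc_eq_integral_Ioc,
    ← intervalIntegral.integral_of_le hx.2, hwx.integral_deriv_eq_sub]

variable {Ω : Type*} {mΩ : MeasurableSpace Ω} {μ : Measure Ω} {X : Ω → ℝ}

lemma integral_comp_eq_sub_integral_deriv_mul [IsFiniteMeasure μ]
    (hX : AEMeasurable X μ) (hXab : ∀ᵐ ω ∂μ, X ω ∈ Set.Icc a b)
    (hw : AbsolutelyContinuousOnInterval w a b) :
    ∫ ω, w (X ω) ∂μ =
      μ.real Set.univ * w b - ∫ y in Set.Icc a b, deriv w y * μ.real {ω | X ω ≤ y} := by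
  have hw' := integrableOn_Icc_deriv_of_absolutelyContinuousOnInterval hw
  have ftc : ∀ᵐ ω ∂μ,
      ∫ y in Set.Icc a b, (Set.Ici (X ω)).indicator (deriv w) y = w b - w (X ω) :=
    hXab.mono fun _ hω ↦ setIntegral_Icc_indicator_Ici_deriv hw hω
  have integrable_sub : Integrable (fun ω ↦ w b - w (X ω)) μ :=
    (integrable_indicator_Ici_prod hX hw').integral_prod_left.congr ftc
  calc ∫ ω, w (X ω) ∂μ = ∫ ω, (w b - (w b - w (X ω))) ∂μ := by simp only [sub_sub_cancel]
    _ = μ.real Set.univ * w b - ∫ ω, (w b - w (X ω)) ∂μ := by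
      rw [integral_sub (integrable_const _) integrable_sub, integral_const, smul_eq_mul]
    _ = _ := by rw [← integral_congr_ae ftc, integral_integral_indicator_Ici hX hw']

variable {Ω' : Type*} {mΩ' : MeasurableSpace Ω'} {ν : Measure Ω'} {Y : Ω' → ℝ}
  [IsProbabilityMeasure μ] [IsProbabilityMeasure ν]

lemma integral_comp_sub_integral_comp_eq_integral_deriv_mul
    (hX : AEMeasurable X μ) (hXab : ∀ᵐ ω ∂μ, X ω ∈ Set.Icc a b)
    (hY : AEMeasurable Y ν) (hYab : ∀ᵐ ω ∂ν, Y ω ∈ Set.Icc a b)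
    (hw : AbsolutelyContinuousOnInterval w a b) :
    ∫ ω, w (X ω) ∂μ - ∫ ω, w (Y ω) ∂ν =
      ∫ y in Set.Icc a b, deriv w y * (ν.real {ω | Y ω ≤ y} - μ.real {ω | X ω ≤ y}) := by
  have hw' := integrableOn_Icc_deriv_of_absolutelyContinuousOnInterval hw
  have integrable_F : IntegrableOn (fun y ↦ deriv w y * μ.real {ω | X ω ≤ y}) (Set.Icc a b) :=
    hw'.mul_of_top_left (memLp_measureReal_le_restrict μ X _ isCompact_Icc)
  have integrable_G : IntegrableOn (fun y ↦ deriv w y * ν.real {ω | Y ω ≤ y}) (Set.Icc a b) :=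
    hw'.mul_of_top_left (memLp_measureReal_le_restrict ν Y _ isCompact_Icc)
  simp_rw [mul_sub]
  rw [integral_sub integrable_G integrable_F,
    integral_comp_eq_sub_integral_deriv_mul hX hXab hw,
    integral_comp_eq_sub_integral_deriv_mul hY hYab hw, probReal_univ, probReal_univ]
  ring

theorem moment_difference_cauchy_schwarz_general
    (hX : AEMeasurable X μ) (hXab : ∀ᵐ ω ∂μ, X ω ∈ Set.Icc a b)
    (hY : AEMeasurable Y ν) (hYab : ∀ᵐ ω ∂ν, Y ω ∈ Set.Icc a b)
    (hw : AbsolutelyContinuousOnInterval w a b)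
    (hw' : MemLp (deriv w) 2 (volume.restrict (Set.Icc a b))) :
    |∫ ω, w (X ω) ∂μ - ∫ ω, w (Y ω) ∂ν| ^ 2 ≤
      (∫ y in Set.Icc a b, |deriv w y| ^ 2) *
        ∫ y in Set.Icc a b, (μ.real {ω | X ω ≤ y} - ν.real {ω | Y ω ≤ y}) ^ 2 := by
  simp_rw [sq_abs, sub_sq_comm (μ.real _)]
  rw [integral_comp_sub_integral_comp_eq_integral_deriv_mul hX hXab hY hYab hw]
  exact sq_integral_mul_le_integral_sq_mul_integral_sq hw'
    ((memLp_measureReal_le_restrict ν Y 2 isCompact_Icc).sub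
      (memLp_measureReal_le_restrict μ X 2 isCompact_Icc))

end AbsolutelyContinuous

/-- For real random variables `X, Y` bounded a.s. by `c₀` with CDFs `F, G`, and a
continuously differentiable `w : ℝ → ℝ`,
`|E[w(X)] − E[w(Y)]|² ≤ (∫_{−c₀}^{c₀} |w'|²) (∫_{−c₀}^{c₀} (F − G)²)`. -/
theorem moment_difference_cauchy_schwarz
    {Ω : Type*} [MeasureSpace Ω] [IsProbabilityMeasure (ℙ : Measure Ω)]
    (c₀ : ℝ) (hc₀ : 0 < c₀)
    (X Y : Ω → ℝ) (hX : Measurable X) (hY : Measurable Y)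
    (hXb : ∀ᵐ ω ∂ℙ, |X ω| ≤ c₀) (hYb : ∀ᵐ ω ∂ℙ, |Y ω| ≤ c₀)
    (w : ℝ → ℝ) (hw : ContDiff ℝ 1 w) :
    |(∫ ω, w (X ω) ∂ℙ) - ∫ ω, w (Y ω) ∂ℙ| ^ 2
      ≤ (∫ y in Set.Icc (-c₀) c₀, |deriv w y| ^ 2) *
        ∫ y in Set.Icc (-c₀) c₀,
          ((ℙ {ω | X ω ≤ y}).toReal - (ℙ {ω | Y ω ≤ y}).toReal) ^ 2 := by
  have hw' : Continuous (deriv w) := hw.continuous_deriv le_rfl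
  exact moment_difference_cauchy_schwarz_general
    hX.aemeasurable (hXb.mono fun _ ↦ abs_le.mp) hY.aemeasurable (hYb.mono fun _ ↦ abs_le.mp)
    hw.contDiffOn.absolutelyContinuousOnInterval
    ((memLp_two_iff_integrable_sq hw'.aestronglyMeasurable).mpr
      (hw'.pow 2).continuousOn.integrableOn_Icc)
end

section
/- Let C_d > 0, let F : ℝ → [0, 1] be Lipschitz with constant C_d (i.e., |F(y₁) − F(y₂)| ≤ C_d|y₁ − y₂| for all y₁, y₂), and let G : ℝ → [0, 1] be nondecreasing. Then for every ỹ ∈ ℝ, |F(ỹ) − G(ỹ)|³ ≤ 3·C_d·∫_{−∞}^{∞} (F(y) − G(y))² dy. -/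
open MeasureTheory

open scoped ENNReal

/-!
The difference `f = F - G` cannot increase faster than slope `C`. So if `f y₀ > 0`, then to the
left of `y₀` the graph of `f` stays above the line of slope `C` through `(y₀, f y₀)`, which takes
each value `s ∈ (0, f y₀]` once, at speed `C`; integrating `φ` along this line gives
`∫₀^{f y₀} φ ≤ C ∫ φ(|f|)` for every increasing `φ`. If `f y₀ < 0`, the point reflection
`y ↦ -f (-y)`, which obeys the same growth condition, reduces to the positive case. The theorem is
the case `φ s = s²`.
-/

theorem ofReal_abs_mul_lintegral_comp_mul_add (φ : ℝ → ℝ≥0∞) {c : ℝ} (hc : c ≠ 0) (b : ℝ) :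
    ENNReal.ofReal |c| * ∫⁻ y, φ (c * y + b) = ∫⁻ y, φ y := by
  have hmap : ∫⁻ z, φ (z + b) ∂(Measure.map (c * ·) volume) = ∫⁻ y, φ (c * y + b) :=
    (Homeomorph.mulLeft₀ c hc).measurableEmbedding.lintegral_map _
  rw [← hmap, ← smul_eq_mul, ← lintegral_smul_measure, Real.smul_map_volume_mul_left hc,
    lintegral_add_right_eq_self φ b]

theorem setLIntegral_Ioc_zero_ofReal_pow {d : ℝ} (hd : 0 ≤ d) (p : ℕ) :
    ∫⁻ s in Set.Ioc 0 d, ENNReal.ofReal (s ^ p) = ENNReal.ofReal (d ^ (p + 1) / (p + 1)) := by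
  rw [← ofReal_integral_eq_lintegral_ofReal, ← intervalIntegral.integral_of_le hd, integral_pow,
    zero_pow p.succ_ne_zero, sub_zero]
  · exact (continuous_pow p).integrableOn_Ioc
  · exact ae_restrict_of_forall_mem measurableSet_Ioc fun s hs => pow_nonneg hs.1.le p

section SlopeBoundedAbove

variable {f : ℝ → ℝ} {C : ℝ} {φ : ℝ → ℝ≥0∞}

theorem setLIntegral_Ioc_zero_apply_le_mul_lintegral_comp_abs (hC : 0 < C)
    (hφ : MonotoneOn φ (Set.Ici 0)) (hf : ∀ x y, x ≤ y → f y - f x ≤ C * (y - x)) (y₀ : ℝ) :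
    ∫⁻ s in Set.Ioc 0 (f y₀), φ s ≤ ENNReal.ofReal C * ∫⁻ y, φ |f y| := by
  have line_le (y : ℝ) :
      (Set.Ioc 0 (f y₀)).indicator φ (C * y + (f y₀ - C * y₀)) ≤ φ |f y| := by
    refine Set.indicator_apply_le' (fun ⟨hpos, hle⟩ => ?_) (fun _ => zero_le)
    have hy : y ≤ y₀ := le_of_mul_le_mul_left (by linarith) hC
    have hline : C * y + (f y₀ - C * y₀) ≤ f y := by linarith [hf y y₀ hy]
    exact hφ hpos.le (abs_nonneg (f y)) (hline.trans (le_abs_self _))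
  calc ∫⁻ s in Set.Ioc 0 (f y₀), φ s
      = ∫⁻ s, (Set.Ioc 0 (f y₀)).indicator φ s := (lintegral_indicator measurableSet_Ioc φ).symm
    _ = ENNReal.ofReal C *
          ∫⁻ y, (Set.Ioc 0 (f y₀)).indicator φ (C * y + (f y₀ - C * y₀)) := by
        rw [← ofReal_abs_mul_lintegral_comp_mul_add _ hC.ne', abs_of_pos hC]
    _ ≤ ENNReal.ofReal C * ∫⁻ y, φ |f y| := by gcongr with y; exact line_le y

theorem setLIntegral_Ioc_zero_abs_le_mul_lintegral_comp_abs (hC : 0 < C)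
    (hφ : MonotoneOn φ (Set.Ici 0)) (hf : ∀ x y, x ≤ y → f y - f x ≤ C * (y - x)) (y₀ : ℝ) :
    ∫⁻ s in Set.Ioc 0 |f y₀|, φ s ≤ ENNReal.ofReal C * ∫⁻ y, φ |f y| := by
  rcases abs_choice (f y₀) with habs | habs
  · simpa only [habs] using setLIntegral_Ioc_zero_apply_le_mul_lintegral_comp_abs hC hφ hf y₀
  · have hreflect : ∀ x y, x ≤ y → -f (-y) - -f (-x) ≤ C * (y - x) := fun x y hxy => by
      linarith [hf (-y) (-x) (neg_le_neg hxy)]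
    have hbound := setLIntegral_Ioc_zero_apply_le_mul_lintegral_comp_abs
      (f := fun y => -f (-y)) hC hφ hreflect (-y₀)
    simpa only [habs, neg_neg, abs_neg, lintegral_neg_eq_self fun y => φ |f y|] using hbound

theorem ofReal_abs_pow_succ_le_mul_lintegral_abs_pow (hC : 0 < C)
    (hf : ∀ x y, x ≤ y → f y - f x ≤ C * (y - x)) (p : ℕ) (y₀ : ℝ) :
    ENNReal.ofReal (|f y₀| ^ (p + 1)) ≤
      ENNReal.ofReal ((p + 1) * C) * ∫⁻ y, ENNReal.ofReal (|f y| ^ p) := by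
  have hmono : MonotoneOn (fun s : ℝ => ENNReal.ofReal (s ^ p)) (Set.Ici 0) :=
    fun s hs t _ hst => ENNReal.ofReal_le_ofReal (pow_le_pow_left₀ hs hst p)
  have hp : (0 : ℝ) < p + 1 := by positivity
  calc ENNReal.ofReal (|f y₀| ^ (p + 1))
      = ENNReal.ofReal (p + 1) * ∫⁻ s in Set.Ioc 0 |f y₀|, ENNReal.ofReal (s ^ p) := by
        rw [setLIntegral_Ioc_zero_ofReal_pow (abs_nonneg _), ← ENNReal.ofReal_mul hp.le,
          mul_div_cancel₀ _ hp.ne']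
    _ ≤ ENNReal.ofReal (p + 1) * (ENNReal.ofReal C * ∫⁻ y, ENNReal.ofReal (|f y| ^ p)) := by
        gcongr
        exact setLIntegral_Ioc_zero_abs_le_mul_lintegral_comp_abs hC hmono hf y₀
    _ = ENNReal.ofReal ((p + 1) * C) * ∫⁻ y, ENNReal.ofReal (|f y| ^ p) := by
        rw [ENNReal.ofReal_mul hp.le, mul_assoc]

end SlopeBoundedAbove

theorem cdf_pointwise_cubed_bound_general {Cd : ℝ} (hCd : 0 < Cd) {F G : ℝ → ℝ}
    (hF : ∀ y₁ y₂, y₁ ≤ y₂ → F y₂ - F y₁ ≤ Cd * (y₂ - y₁)) (hG : Monotone G) (y0 : ℝ) :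
    ENNReal.ofReal (|F y0 - G y0| ^ 3)
      ≤ ENNReal.ofReal (3 * Cd) * ∫⁻ y : ℝ, ENNReal.ofReal ((F y - G y) ^ 2) := by
  have hslope : ∀ x y, x ≤ y → (F y - G y) - (F x - G x) ≤ Cd * (y - x) := fun x y hxy => by
    linarith [hF x y hxy, hG hxy]
  have hthree : ((2 : ℕ) : ℝ) + 1 = 3 := by norm_num
  simpa only [hthree, sq_abs] using ofReal_abs_pow_succ_le_mul_lintegral_abs_pow hCd hslope 2 y0

/-- If `F : ℝ → [0,1]` is Lipschitz with constant `C_d` and `G : ℝ → [0,1]` is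
nondecreasing, then for every `y0`, `|F(y0) − G(y0)|³ ≤ 3 C_d ∫ (F − G)²`. The
right-hand side is stated as a Lebesgue integral in `ℝ≥0∞`, so that the
inequality also covers the case where the integral is infinite. -/
theorem cdf_pointwise_cubed_bound
    (Cd : ℝ) (hCd : 0 < Cd)
    (F G : ℝ → ℝ)
    (hF01 : ∀ y, F y ∈ Set.Icc (0:ℝ) 1) (hG01 : ∀ y, G y ∈ Set.Icc (0:ℝ) 1)
    (hFLip : ∀ y₁ y₂ : ℝ, |F y₁ - F y₂| ≤ Cd * |y₁ - y₂|)
    (hG : Monotone G) :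
    ∀ y0 : ℝ, ENNReal.ofReal (|F y0 - G y0| ^ 3)
      ≤ ENNReal.ofReal (3 * Cd) * ∫⁻ y : ℝ, ENNReal.ofReal ((F y - G y) ^ 2) :=
  cdf_pointwise_cubed_bound_general hCd (fun y₁ y₂ hy => (le_abs_self _).trans <|
    (hFLip y₂ y₁).trans_eq <| by rw [abs_of_nonneg (sub_nonneg.2 hy)]) hG
end
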